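/- The map S : F_n → L(H) is a partial representation of the free group F_n on H: (P1) S(e) = I; (P2) S(t^{-1}) = S(t)* for all t ∈ F_n; and (P3) S(t)S(r)S(r^{-1}) = S(tr)S(r^{-1}) for all t, r ∈ F_n. -/

import Mathlib

open ContinuousLinearMap

/-- For a positive word `μ = μ₁…μ_k` over the alphabet `{1,…,n}`,
`Sw S μ = S_{μ₁} ⋯ S_{μ_k}`, with `Sw S [] = 1`. -/
noncomputable def Sw {H : Type*} [NormedAddCommGroup H] [InnerProductSpace ℂ H]
    {n : ℕ} (S : Fin n → H →L[ℂ] H) (μ : List (Fin n)) : H →L[ℂ] H :=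
  (μ.map S).prod

/-- `Lset Λ μ k` is the set `L_μ^k` of words `ν = ν₁…ν_k ∈ Λ` of length `k`
such that `μν₁…ν_{k-1} ∈ Λ` but `μν ∉ Λ`. -/
def Lset {n : ℕ} (Λ : Set (List (Fin n))) (μ : List (Fin n)) (k : ℕ) :
    Set (List (Fin n)) :=
  {ν | ν.length = k ∧ ν ∈ Λ ∧ μ ++ ν.dropLast ∈ Λ ∧ μ ++ ν ∉ Λ}

/-- For `t` in the free group `F_n` with reduced form `t = t₁⋯t_k`,
`Smap S t = S(t₁)⋯S(t_k)`, where `S(g_j) = S j` and `S(g_j⁻¹) = (S j)*`;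
`Smap S 1 = 1`.  (In `FreeGroup (Fin n)`, the letter `(j, true)` is the
generator `g_j` and `(j, false)` is its inverse `g_j⁻¹`, and `.toWord`
is the reduced word of an element.) -/
noncomputable def Smap {H : Type*} [NormedAddCommGroup H] [InnerProductSpace ℂ H]
    [CompleteSpace H] {n : ℕ} (S : Fin n → H →L[ℂ] H) (t : FreeGroup (Fin n)) :
    H →L[ℂ] H :=
  (t.toWord.map (fun p => if p.2 then S p.1 else adjoint (S p.1))).prod

/-!
The idea is to look at the set `𝒟` of the projections `S_μ S_μ*`. By (M1) the ranges of the `S_i`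
are orthogonal, and by (M3) each `S_i* S_i` lies in the bicommutant `𝒟''`. Since `S_i* p S_i ∈ 𝒟''`
for every `p ∈ 𝒟`, an induction on words shows that `𝒟`, hence `𝒟''`, is commutative, and then that
`𝒟''` is stable under conjugation by every `S_i` and `S_i*`. Consequently, for an arbitrary word in
the `S_i` and `S_i*` with product `w`, the element `w w*` lies in the commutative set `𝒟''`, and `w`
is a partial isometry.

For (P3), write `t = ax` and `r = x⁻¹b` where `ab` is reduced. The identity becomes
`a (x x*) (b b*) x = a (b b*) x`, which holds because `x x*` and `b b*` commute and `x x* x = x`.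
-/

/-- An element `a` of a star semigroup is a partial isometry if `a a* a = a`; for operators on a
Hilbert space this is the usual notion. -/
def IsPartialIsometry {R : Type*} [Mul R] [Star R] (a : R) : Prop :=
  a * star a * a = a

namespace IsPartialIsometry

variable {R : Type*} [Semigroup R] [StarMul R] {a : R}

theorem star_mul_mul_star (ha : IsPartialIsometry a) : star a * a * star a = star a := by
  simpa only [star_mul, star_star, mul_assoc] using congrArg star ha

protected theorem star (ha : IsPartialIsometry a) : IsPartialIsometry (star a) := by
  simpa only [IsPartialIsometry, star_star] using ha.star_mul_mul_star

/-- This is what makes conjugation by `a` compatible with passing to commutants. -/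
theorem commute_conj {x y : R} (ha : IsPartialIsometry a) (hy : Commute y (a * star a))
    (hx : Commute x (star a * y * a)) : Commute y (a * x * star a) :=
  calc y * (a * x * star a)
      = y * (a * star a * a * x * star a) := by rw [ha]
    _ = y * (a * star a) * a * x * star a := by simp only [mul_assoc]
    _ = a * (star a * y * a * x) * star a := by rw [hy.eq]; simp only [mul_assoc]
    _ = a * x * star a * (y * (a * star a)) := by rw [← hx.eq]; simp only [mul_assoc]
    _ = a * x * (star a * a * star a) * y := by rw [hy.eq]; simp only [mul_assoc]
    _ = a * x * star a * y := by rw [ha.star_mul_mul_star]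

theorem conj_mem_centralizer_centralizer {s : Set R} (ha : IsPartialIsometry a)
    (h_source : star a * a ∈ s.centralizer) (h_range : a * star a ∈ s.centralizer.centralizer)
    (h_conj : ∀ p ∈ s, a * p * star a ∈ s.centralizer.centralizer) {x : R}
    (hx : x ∈ s.centralizer.centralizer) : a * x * star a ∈ s.centralizer.centralizer := by
  intro y hy
  have hy_conj : star a * y * a ∈ s.centralizer := by
    intro p hp
    have h_comm : Commute p (star a * y * star (star a)) :=
      ha.star.commute_conj (by rw [star_star]; exact h_source p hp)
        (by rw [star_star]; exact h_conj p hp y hy)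
    rwa [star_star] at h_comm
  exact ha.commute_conj (h_range y hy) (hx _ hy_conj).symm

theorem mul_star_mul_mul_of_commute {p : R} (ha : IsPartialIsometry a)
    (hp : Commute (a * star a) p) : a * star a * p * a = p * a := by
  rw [hp.eq, mul_assoc, ha]

theorem mul {b : R} (ha : IsPartialIsometry a) (hb : IsPartialIsometry b)
    (hab : Commute (star a * a) (b * star b)) : IsPartialIsometry (a * b) :=
  calc a * b * star (a * b) * (a * b)
      = a * (b * star b * (star a * a)) * b := by simp only [star_mul, mul_assoc]
    _ = a * star a * a * (b * star b * b) := by rw [← hab.eq]; simp only [mul_assoc]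
    _ = a * b := by rw [ha, hb]

end IsPartialIsometry

section ConjugationInvariant

variable {R : Type*} [Monoid R] [StarMul R] {E : Set R}

theorem prod_mul_star_prod_mem_of_conj_mem (h_one : 1 ∈ E) (l : List R)
    (h_conj : ∀ a ∈ l, ∀ x ∈ E, a * x * star a ∈ E) : l.prod * star l.prod ∈ E := by
  induction l with
  | nil => simpa using h_one
  | cons a l ih =>
    rw [List.forall_mem_cons] at h_conj
    simpa only [List.prod_cons, star_mul, mul_assoc] using h_conj.1 _ (ih h_conj.2)

theorem isPartialIsometry_list_prod (h_one : 1 ∈ E) (h_comm : ∀ x ∈ E, ∀ y ∈ E, Commute x y)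
    (l : List R) (h_isom : ∀ a ∈ l, IsPartialIsometry a)
    (h_conj : ∀ a ∈ l, ∀ x ∈ E, a * x * star a ∈ E) (h_source : ∀ a ∈ l, star a * a ∈ E) :
    IsPartialIsometry l.prod := by
  induction l with
  | nil => simp [IsPartialIsometry]
  | cons a l ih =>
    rw [List.forall_mem_cons] at h_isom h_conj h_source
    rw [List.prod_cons]
    exact h_isom.1.mul (ih h_isom.2 h_conj.2 h_source.2) <|
      h_comm _ h_source.1 _ (prod_mul_star_prod_mem_of_conj_mem h_one l h_conj.2)

end ConjugationInvariant

theorem star_mul_eq_zero_of_sum_mul_star_le_one {A ι : Type*} [NormedRing A] [StarRing A]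
    [CStarRing A] [PartialOrder A] [StarOrderedRing A] [Fintype ι] {S : ι → A}
    (h_sum : ∑ i, S i * star (S i) ≤ 1) {j : ι} (hj : IsPartialIsometry (S j)) {i : ι}
    (hij : i ≠ j) : star (S i) * S j = 0 := by
  classical
  let f : ι → A := fun k => star (star (S k) * S j) * (star (S k) * S j)
  have hf_nonneg : ∀ k, 0 ≤ f k := fun k => star_mul_self_nonneg _
  have hf_self : f j = star (S j) * S j := by
    simp only [f, star_mul, star_star, mul_assoc]
    rw [← mul_assoc (S j) (star (S j)), hj]
  have hf_sum : ∑ k, f k ≤ f j :=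
    calc ∑ k, f k = star (S j) * (∑ k, S k * star (S k)) * S j := by
          simp only [f, star_mul, star_star, mul_assoc, Finset.mul_sum, Finset.sum_mul]
      _ ≤ star (S j) * 1 * S j := star_left_conjugate_le_conjugate h_sum _
      _ = f j := by rw [mul_one, hf_self]
  have hf_rest : ∑ k ∈ Finset.univ.erase j, f k = 0 := by
    refine le_antisymm ?_ (Finset.sum_nonneg fun k _ => hf_nonneg k)
    rwa [← Finset.add_sum_erase _ f (Finset.mem_univ j), add_le_iff_nonpos_right] at hf_sum
  exact CStarRing.star_mul_self_eq_zero_iff _ |>.1 <|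
    (Finset.sum_eq_zero_iff_of_nonneg fun k _ => hf_nonneg k).1 hf_rest i (by simp [hij])

theorem mem_centralizer_centralizer_of_hasSum_one_sub {R ι : Type*} [Ring R] [TopologicalSpace R]
    [IsTopologicalSemiring R] [T2Space R] {s : Set R} {f : ι → R} {q : R} (hf : ∀ k, f k ∈ s)
    (h_sum : HasSum f (1 - q)) : q ∈ s.centralizer.centralizer := by
  intro y hy
  have hf_comm : (fun k => y * f k) = fun k => f k * y := funext fun k => (hy _ (hf k)).symm
  have h_comm : Commute y (1 - q) :=
    (h_sum.mul_left y).unique (hf_comm ▸ h_sum.mul_right y)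
  have h_comm_sub := (Commute.one_right y).sub_right h_comm
  rwa [sub_sub_cancel] at h_comm_sub

/-- The projection `S_μ S_μ*` attached to a positive word `μ`. -/
def wordProj {R α : Type*} [Monoid R] [Star R] (S : α → R) (μ : List α) : R :=
  (μ.map S).prod * star (μ.map S).prod

/-- The bicommutant of the projections `S_μ S_μ*`, where `μ` runs over all positive words. -/
def diagonal {R α : Type*} [Monoid R] [Star R] (S : α → R) : Set R :=
  (Set.range (wordProj S)).centralizer.centralizer

section WordProj

variable {R α : Type*} [Monoid R] [StarMul R]

theorem wordProj_nil (S : α → R) : wordProj S [] = 1 := by simp [wordProj]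

theorem wordProj_cons (S : α → R) (i : α) (μ : List α) :
    wordProj S (i :: μ) = S i * wordProj S μ * star (S i) := by
  simp [wordProj, mul_assoc]

theorem wordProj_singleton (S : α → R) (i : α) : wordProj S [i] = S i * star (S i) := by
  simp [wordProj]

theorem wordProj_mem_diagonal (S : α → R) (μ : List α) : wordProj S μ ∈ diagonal S :=
  Set.subset_centralizer_centralizer (Set.mem_range_self μ)

end WordProj

section Diagonal

variable {R α : Type*} [MonoidWithZero R] [StarMul R] {S : α → R}

theorem wordProj_commute_mul_star (h_isom : ∀ i, IsPartialIsometry (S i))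
    (h_orth : Pairwise fun i j => star (S i) * S j = 0) (i : α) (μ : List α) :
    Commute (wordProj S μ) (S i * star (S i)) := by
  cases μ with
  | nil => simp [wordProj_nil]
  | cons j μ =>
    rw [wordProj_cons]
    rcases eq_or_ne i j with rfl | hij
    · calc S i * wordProj S μ * star (S i) * (S i * star (S i))
          = S i * wordProj S μ * (star (S i) * S i * star (S i)) := by simp only [mul_assoc]
        _ = S i * star (S i) * S i * wordProj S μ * star (S i) := by
          rw [(h_isom i).star_mul_mul_star, h_isom i]
        _ = S i * star (S i) * (S i * wordProj S μ * star (S i)) := by simp only [mul_assoc]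
    · calc S j * wordProj S μ * star (S j) * (S i * star (S i))
          = S j * wordProj S μ * (star (S j) * S i) * star (S i) := by simp only [mul_assoc]
        _ = S i * (star (S i) * S j) * wordProj S μ * star (S j) := by
          simp only [h_orth hij, h_orth hij.symm, mul_zero, zero_mul]
        _ = S i * star (S i) * (S j * wordProj S μ * star (S j)) := by simp only [mul_assoc]

theorem star_mul_wordProj_mul_mem_diagonal (h_orth : Pairwise fun i j => star (S i) * S j = 0)
    (h_source : ∀ i, star (S i) * S i ∈ diagonal S) (i : α) (μ : List α) :
    star (S i) * wordProj S μ * S i ∈ diagonal S := by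
  cases μ with
  | nil => simpa only [wordProj_nil, mul_one] using h_source i
  | cons j μ =>
    have h_assoc : star (S i) * wordProj S (j :: μ) * S i
        = star (S i) * S j * wordProj S μ * (star (S j) * S i) := by
      simp only [wordProj_cons, mul_assoc]
    rw [h_assoc]
    rcases eq_or_ne i j with rfl | hij
    · exact Set.mul_mem_centralizer
        (Set.mul_mem_centralizer (h_source i) (wordProj_mem_diagonal S μ)) (h_source i)
    · rw [h_orth hij, zero_mul, zero_mul]
      exact Set.zero_mem_centralizer

theorem wordProj_commute (h_isom : ∀ i, IsPartialIsometry (S i))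
    (h_orth : Pairwise fun i j => star (S i) * S j = 0)
    (h_source : ∀ i, star (S i) * S i ∈ diagonal S) (μ ν : List α) :
    Commute (wordProj S μ) (wordProj S ν) := by
  induction ν generalizing μ with
  | nil => simp [wordProj_nil]
  | cons i ν ih =>
    have h_mem : wordProj S ν ∈ (Set.range (wordProj S)).centralizer := by
      rintro _ ⟨κ, rfl⟩
      exact ih κ
    rw [wordProj_cons]
    exact (h_isom i).commute_conj (wordProj_commute_mul_star h_isom h_orth i μ)
      (star_mul_wordProj_mul_mem_diagonal h_orth h_source i μ _ h_mem)

theorem diagonal_commute (h_isom : ∀ i, IsPartialIsometry (S i))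
    (h_orth : Pairwise fun i j => star (S i) * S j = 0)
    (h_source : ∀ i, star (S i) * S i ∈ diagonal S) :
    ∀ x ∈ diagonal S, ∀ y ∈ diagonal S, Commute x y := by
  apply Set.centralizer_centralizer_comm_of_comm
  rintro _ ⟨μ, rfl⟩ _ ⟨ν, rfl⟩
  exact wordProj_commute h_isom h_orth h_source μ ν

theorem diagonal_subset_centralizer (h_isom : ∀ i, IsPartialIsometry (S i))
    (h_orth : Pairwise fun i j => star (S i) * S j = 0)
    (h_source : ∀ i, star (S i) * S i ∈ diagonal S) :
    diagonal S ⊆ (Set.range (wordProj S)).centralizer := by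
  rintro x hx _ ⟨μ, rfl⟩
  exact diagonal_commute h_isom h_orth h_source _ (wordProj_mem_diagonal S μ) x hx

end Diagonal

section SignedLetter

/-- The value `S(g_i) = S_i` or `S(g_i⁻¹) = S_i*` at a letter of the free group, encoded as in
`FreeGroup`: the letter `(i, true)` is `g_i`, and `(i, false)` is `g_i⁻¹`. -/
def signedLetter {R α : Type*} [Star R] (S : α → R) (p : α × Bool) : R :=
  if p.2 then S p.1 else star (S p.1)

/-- The product of the values of the letters of a word, which may fail to be reduced. -/
def signedWord {R α : Type*} [Monoid R] [Star R] (S : α → R) (L : List (α × Bool)) : R :=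
  (L.map (signedLetter S)).prod

variable {R α : Type*}

theorem signedLetter_not [InvolutiveStar R] (S : α → R) (i : α) (b : Bool) :
    signedLetter S (i, !b) = star (signedLetter S (i, b)) := by
  cases b <;> simp [signedLetter]

theorem signedWord_append [Monoid R] [Star R] (S : α → R) (L M : List (α × Bool)) :
    signedWord S (L ++ M) = signedWord S L * signedWord S M := by
  simp [signedWord]

theorem signedWord_invRev [Monoid R] [StarMul R] (S : α → R) (L : List (α × Bool)) :
    signedWord S (FreeGroup.invRev L) = star (signedWord S L) := by
  induction L with
  | nil => simp [signedWord]
  | cons p L ih =>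
    rw [FreeGroup.invRev_cons, signedWord_append, ih]
    simp [signedWord, FreeGroup.invRev, signedLetter_not]

theorem signedLetter_isPartialIsometry [Semigroup R] [StarMul R] {S : α → R}
    (h_isom : ∀ i, IsPartialIsometry (S i)) (p : α × Bool) :
    IsPartialIsometry (signedLetter S p) := by
  obtain ⟨i, _ | _⟩ := p
  · exact (h_isom i).star
  · exact h_isom i

theorem star_signedLetter_mul_mem_diagonal [Monoid R] [StarMul R] {S : α → R}
    (h_source : ∀ i, star (S i) * S i ∈ diagonal S) (p : α × Bool) :
    star (signedLetter S p) * signedLetter S p ∈ diagonal S := by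
  obtain ⟨i, _ | _⟩ := p
  · simpa [signedLetter, wordProj_singleton] using wordProj_mem_diagonal S [i]
  · exact h_source i

variable [MonoidWithZero R] [StarMul R] {S : α → R}

theorem signedLetter_conj_wordProj_mem_diagonal
    (h_orth : Pairwise fun i j => star (S i) * S j = 0)
    (h_source : ∀ i, star (S i) * S i ∈ diagonal S) (p : α × Bool) (μ : List α) :
    signedLetter S p * wordProj S μ * star (signedLetter S p) ∈ diagonal S := by
  obtain ⟨i, _ | _⟩ := p
  · simpa [signedLetter] using star_mul_wordProj_mul_mem_diagonal h_orth h_source i μ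
  · simpa [signedLetter, wordProj_cons] using wordProj_mem_diagonal S (i :: μ)

theorem signedLetter_conj_mem_diagonal (h_isom : ∀ i, IsPartialIsometry (S i))
    (h_orth : Pairwise fun i j => star (S i) * S j = 0)
    (h_source : ∀ i, star (S i) * S i ∈ diagonal S) (p : α × Bool) {x : R}
    (hx : x ∈ diagonal S) : signedLetter S p * x * star (signedLetter S p) ∈ diagonal S := by
  refine (signedLetter_isPartialIsometry h_isom p).conj_mem_centralizer_centralizer
    (diagonal_subset_centralizer h_isom h_orth h_source
      (star_signedLetter_mul_mem_diagonal h_source p)) ?_ ?_ hx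
  · have h_range := signedLetter_conj_wordProj_mem_diagonal h_orth h_source p []
    rwa [wordProj_nil, mul_one] at h_range
  · rintro _ ⟨μ, rfl⟩
    exact signedLetter_conj_wordProj_mem_diagonal h_orth h_source p μ

theorem signedWord_mul_star_mem_diagonal (h_isom : ∀ i, IsPartialIsometry (S i))
    (h_orth : Pairwise fun i j => star (S i) * S j = 0)
    (h_source : ∀ i, star (S i) * S i ∈ diagonal S) (L : List (α × Bool)) :
    signedWord S L * star (signedWord S L) ∈ diagonal S := by
  refine prod_mul_star_prod_mem_of_conj_mem Set.one_mem_centralizer _ ?_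
  exact List.forall_mem_map.2 fun p _ _ => signedLetter_conj_mem_diagonal h_isom h_orth h_source p

theorem signedWord_isPartialIsometry (h_isom : ∀ i, IsPartialIsometry (S i))
    (h_orth : Pairwise fun i j => star (S i) * S j = 0)
    (h_source : ∀ i, star (S i) * S i ∈ diagonal S) (L : List (α × Bool)) :
    IsPartialIsometry (signedWord S L) := by
  refine isPartialIsometry_list_prod Set.one_mem_centralizer
    (diagonal_commute h_isom h_orth h_source) _ ?_ ?_ ?_
  · exact List.forall_mem_map.2 fun p _ => signedLetter_isPartialIsometry h_isom p
  · exact List.forall_mem_map.2 fun p _ _ =>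
      signedLetter_conj_mem_diagonal h_isom h_orth h_source p
  · exact List.forall_mem_map.2 fun p _ => star_signedLetter_mul_mem_diagonal h_source p

end SignedLetter

section FreeGroup

variable {α : Type*}

theorem exists_reduced_append_of_isReduced {L M : List (α × Bool)} (hL : FreeGroup.IsReduced L)
    (hM : FreeGroup.IsReduced M) :
    ∃ A X B, L = A ++ X ∧ M = FreeGroup.invRev X ++ B ∧ FreeGroup.IsReduced (A ++ B) := by
  induction L using List.reverseRecOn generalizing M with
  | nil => exact ⟨[], [], M, rfl, rfl, hM⟩
  | append_singleton L p ih =>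
    cases M with
    | nil => exact ⟨L ++ [p], [], [], by simp, rfl, by simpa using hL⟩
    | cons q M =>
      by_cases h_cancel : p.1 = q.1 → p.2 = q.2
      · refine ⟨L ++ [p], [], q :: M, by simp, rfl, hL.append hM ?_⟩
        simpa using h_cancel
      · obtain ⟨A, X, B, rfl, rfl, hAB⟩ :=
          ih hL.left_of_append hM.tail
        have hq : q = (p.1, !p.2) := by
          obtain ⟨h_index, h_sign⟩ := Classical.not_imp.1 h_cancel
          exact Prod.ext h_index.symm (Bool.eq_not.2 (Ne.symm h_sign))
        exact ⟨A, X ++ [p], B, by simp, by simp [hq, FreeGroup.invRev], hAB⟩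

theorem exists_toWord_mul_eq_append [DecidableEq α] (t r : FreeGroup α) :
    ∃ A X B, t.toWord = A ++ X ∧ r.toWord = FreeGroup.invRev X ++ B ∧
      (t * r).toWord = A ++ B := by
  obtain ⟨A, X, B, ht, hr, hAB⟩ := exists_reduced_append_of_isReduced
    (FreeGroup.isReduced_toWord (x := t)) (FreeGroup.isReduced_toWord (x := r))
  have h_mul : t * r = FreeGroup.mk (A ++ B) := by
    rw [← FreeGroup.mk_toWord (x := t), ← FreeGroup.mk_toWord (x := r), ht, hr]
    simp only [← FreeGroup.mul_mk, ← FreeGroup.inv_mk]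
    group
  exact ⟨A, X, B, ht, hr, by rw [h_mul, FreeGroup.toWord_mk, hAB.reduce_eq]⟩

end FreeGroup

theorem stmt_9_general {R α : Type*} [MonoidWithZero R] [StarMul R] [DecidableEq α] {S : α → R}
    (h_isom : ∀ i, IsPartialIsometry (S i))
    (h_orth : Pairwise fun i j => star (S i) * S j = 0)
    (h_source : ∀ i, star (S i) * S i ∈ diagonal S) :
    signedWord S (1 : FreeGroup α).toWord = 1 ∧
    (∀ t : FreeGroup α, signedWord S t⁻¹.toWord = star (signedWord S t.toWord)) ∧
    (∀ t r : FreeGroup α,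
      signedWord S t.toWord * signedWord S r.toWord * signedWord S r⁻¹.toWord =
        signedWord S (t * r).toWord * signedWord S r⁻¹.toWord) := by
  refine ⟨by simp [signedWord], fun t => by rw [FreeGroup.toWord_inv, signedWord_invRev], ?_⟩
  intro t r
  obtain ⟨A, X, B, ht, hr, htr⟩ := exists_toWord_mul_eq_append t r
  rw [FreeGroup.toWord_inv, signedWord_invRev, htr, ht, hr]
  simp only [signedWord_append, signedWord_invRev, star_mul, star_star]
  have h_isom_x := signedWord_isPartialIsometry h_isom h_orth h_source X
  have h_comm := diagonal_commute h_isom h_orth h_source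
    _ (signedWord_mul_star_mem_diagonal h_isom h_orth h_source X)
    _ (signedWord_mul_star_mem_diagonal h_isom h_orth h_source B)
  generalize signedWord S A = a, signedWord S X = x, signedWord S B = b at *
  calc a * x * (star x * b) * (star b * x)
      = a * (x * star x * (b * star b) * x) := by simp only [mul_assoc]
    _ = a * (b * star b * x) := by rw [h_isom_x.mul_star_mul_mul_of_commute h_comm]
    _ = a * b * (star b * x) := by simp only [mul_assoc]

theorem stmt_9 {H : Type*} [NormedAddCommGroup H] [InnerProductSpace ℂ H]
    [CompleteSpace H]
    (n : ℕ) (hn : 1 ≤ n) (S : Fin n → H →L[ℂ] H)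
    (hpi : ∀ i, S i * adjoint (S i) * S i = S i)
    (Λ : Set (List (Fin n)))
    (hΛe : ([] : List (Fin n)) ∈ Λ)
    (hΛg : ∀ i : Fin n, [i] ∈ Λ)
    (hΛsub : ∀ ν ∈ Λ, ∀ w : List (Fin n), w <:+: ν → w ∈ Λ)
    (hM1 : ∑ i, S i * adjoint (S i) = 1)
    (hM2 : ∀ μ ∈ Λ, ∀ ν ∈ Λ,
      Commute (Sw S μ * adjoint (Sw S μ)) (adjoint (Sw S ν) * Sw S ν))
    (hM3 : ∀ i : Fin n,
      HasSum (fun ν : ↥(⋃ k ≥ 1, Lset Λ [i] k) => Sw S ν.1 * adjoint (Sw S ν.1))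
        (1 - adjoint (S i) * S i)) :
    Smap S (1 : FreeGroup (Fin n)) = 1 ∧
    (∀ t : FreeGroup (Fin n), Smap S t⁻¹ = adjoint (Smap S t)) ∧
    (∀ t r : FreeGroup (Fin n),
      Smap S t * Smap S r * Smap S r⁻¹ = Smap S (t * r) * Smap S r⁻¹) :=
  stmt_9_general hpi (fun _ j hij => star_mul_eq_zero_of_sum_mul_star_le_one hM1.le (hpi j) hij)
    fun i => mem_centralizer_centralizer_of_hasSum_one_sub (fun _ => Set.mem_range_self _) (hM3 i)
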